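/- Let A_Γ be a CLTTF Artin group. There exist a constant A > 0 and a function k: (0,∞) → (0,∞) such that for every stable coset C ⊆ A_Γ there are three subsets Q1, Q2, Q3 ⊆ A_Γ, each of which is the image of an (A,A)-quasi-isometric embedding of the Euclidean plane ℝ² into (A_Γ, d), such that for every r ≥ A the Hausdorff distance between C and N_r(Q1) ∩ N_r(Q2) ∩ N_r(Q3) is less than k(r), where N_r denotes the closed r-neighborhood with respect to the word metric. (This is the CLTTF case of the statement that every stable line is a coarse intersection of three 2-dimensional quasiflats.) -/

import Mathlib

/-- The alternating product `x y x y ⋯` with `n` factors. -/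
def altProd {G : Type*} [Monoid G] : ℕ → G → G → G
  | 0, _, _ => 1
  | n + 1, x, y => x * altProd n y x

/-- A simple graph with each edge labeled by an integer `≥ 2`. -/
structure LabeledGraph (V : Type*) where
  graph : SimpleGraph V
  label : V → V → ℕ
  label_symm : ∀ a b, label a b = label b a
  two_le_label : ∀ ⦃a b⦄, graph.Adj a b → 2 ≤ label a b

namespace LabeledGraph

variable {V : Type*} (Γ : LabeledGraph V)

/-- The Artin relations `prod(a,b;m) = prod(b,a;m)` associated to a labeled graph,
as elements of the free group on the vertices. -/
def artinRels : Set (FreeGroup V) :=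
  { r | ∃ a b, Γ.graph.Adj a b ∧
      r = altProd (Γ.label a b) (FreeGroup.of a) (FreeGroup.of b) *
          (altProd (Γ.label a b) (FreeGroup.of b) (FreeGroup.of a))⁻¹ }

end LabeledGraph

/-- The Artin group with defining labeled graph `Γ`. -/
abbrev ArtinGroup {V : Type*} (Γ : LabeledGraph V) :=
  PresentedGroup Γ.artinRels

/-- The standard generator of the Artin group corresponding to a vertex. -/
def artinGen {V : Type*} (Γ : LabeledGraph V) (v : V) : ArtinGroup Γ :=
  PresentedGroup.of v

/-- Word length of a group element with respect to a set `S` of generators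
(words may use generators and their inverses). -/
noncomputable def wordLength {G : Type*} [Group G] (S : Set G) (g : G) : ℕ :=
  sInf { n | ∃ l : List G, l.length = n ∧ (∀ x ∈ l, x ∈ S ∨ x⁻¹ ∈ S) ∧ l.prod = g }

/-- Word metric with respect to a generating set `S`. -/
noncomputable def wordDist {G : Type*} [Group G] (S : Set G) (g h : G) : ℝ :=
  (wordLength S (g⁻¹ * h) : ℝ)

/-- The word metric on an Artin group with respect to the standard generators. -/
noncomputable def artinDist {V : Type*} (Γ : LabeledGraph V) :
    ArtinGroup Γ → ArtinGroup Γ → ℝ :=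
  wordDist (Set.range (artinGen Γ))

/-- `(L,A)`-quasi-isometric embedding between spaces with distance functions. -/
def IsQIEmbedding {X Y : Type*} (L A : ℝ) (dX : X → X → ℝ) (dY : Y → Y → ℝ)
    (q : X → Y) : Prop :=
  ∀ x x', dX x x' / L - A ≤ dY (q x) (q x') ∧ dY (q x) (q x') ≤ L * dX x x' + A

/-- `(L,A)`-quasi-isometry: an `(L,A)`-quasi-isometric embedding with `A`-dense image. -/
def IsQuasiIsometry {X Y : Type*} (L A : ℝ) (dX : X → X → ℝ) (dY : Y → Y → ℝ)
    (q : X → Y) : Prop :=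
  IsQIEmbedding L A dX dY q ∧ ∀ y : Y, ∃ x : X, dY (q x) y ≤ A

/-- CLTTF: connected with at least three vertices, large type, triangle free. -/
def LabeledGraph.CLTTF {V : Type*} (Γ : LabeledGraph V) : Prop :=
  Γ.graph.Connected ∧ 3 ≤ Nat.card V ∧
    (∀ ⦃a b⦄, Γ.graph.Adj a b → 3 ≤ Γ.label a b) ∧ Γ.graph.CliqueFree 3

/-- A decomposition of `Γ` as a union of two full subgraphs (given by vertex sets
`S₁`, `S₂`, each different from `T`) intersecting along `T`. -/
def LabeledGraph.IsSepDecomp {V : Type*} (Γ : LabeledGraph V) (S₁ S₂ T : Set V) : Prop :=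
  S₁ ∪ S₂ = Set.univ ∧ S₁ ∩ S₂ = T ∧ S₁ ≠ T ∧ S₂ ≠ T ∧
    ∀ ⦃a b⦄, Γ.graph.Adj a b → (a ∈ S₁ ∧ b ∈ S₁) ∨ (a ∈ S₂ ∧ b ∈ S₂)

/-- `Γ` has a separating vertex or a separating edge. -/
def LabeledGraph.HasSeparatingVertexOrEdge {V : Type*} (Γ : LabeledGraph V) : Prop :=
  (∃ v : V, ∃ S₁ S₂ : Set V, Γ.IsSepDecomp S₁ S₂ {v}) ∨
    ∃ a b : V, Γ.graph.Adj a b ∧ ∃ S₁ S₂ : Set V, Γ.IsSepDecomp S₁ S₂ {a, b}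

/-- An isomorphism of labeled graphs: a graph isomorphism preserving edge labels. -/
structure LabeledGraphIso {V V' : Type*} (Γ : LabeledGraph V) (Γ' : LabeledGraph V') where
  toEquiv : V ≃ V'
  adj_iff : ∀ a b, Γ'.graph.Adj (toEquiv a) (toEquiv b) ↔ Γ.graph.Adj a b
  label_eq : ∀ ⦃a b⦄, Γ.graph.Adj a b → Γ'.label (toEquiv a) (toEquiv b) = Γ.label a b

/-- `f` is an isometry for the distance function `d`. -/
def IsIsometryOf {X : Type*} (d : X → X → ℝ) (f : X → X) : Prop :=
  ∀ x y, d (f x) (f y) = d x y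

/-- The left coset `g•H` as a set. -/
def leftCosetSet {G : Type*} [Group G] (g : G) (H : Subgroup G) : Set G :=
  (fun x => g * x) '' (H : Set G)

/-- The standard subgroup generated by the two endpoints of an edge. -/
def edgeSubgroup {V : Type*} (Γ : LabeledGraph V) (a b : V) : Subgroup (ArtinGroup Γ) :=
  Subgroup.closure {artinGen Γ a, artinGen Γ b}

/-- The standard subgroup generated by a set of vertices. -/
def standardSubgroup {V : Type*} (Γ : LabeledGraph V) (S : Set V) :
    Subgroup (ArtinGroup Γ) :=
  Subgroup.closure (artinGen Γ '' S)

/-- The element `Δ_e = prod(a,b;m)` associated to an edge `e = {a,b}` of label `m`. -/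
def artinDelta {V : Type*} (Γ : LabeledGraph V) (a b : V) : ArtinGroup Γ :=
  altProd (Γ.label a b) (artinGen Γ a) (artinGen Γ b)

/-- A leaf of a graph: a vertex with a unique neighbour. -/
def LabeledGraph.IsLeaf {V : Type*} (Γ : LabeledGraph V) (a : V) : Prop :=
  ∃! b, Γ.graph.Adj a b

/-- A stable vertex: not a leaf, or a leaf whose unique incident edge has odd label
and whose other endpoint is not a leaf. -/
def LabeledGraph.StableVertex {V : Type*} (Γ : LabeledGraph V) (a : V) : Prop :=
  ¬ Γ.IsLeaf a ∨
    (Γ.IsLeaf a ∧ ∃ b, Γ.graph.Adj a b ∧ Odd (Γ.label a b) ∧ ¬ Γ.IsLeaf b)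

/-- Stable cosets: left cosets of cyclic subgroups `⟨Δ_e⟩` for an edge `e`, or `⟨a⟩`
for a stable vertex `a`. -/
def StableCoset {V : Type*} (Γ : LabeledGraph V) (C : Set (ArtinGroup Γ)) : Prop :=
  (∃ (g : ArtinGroup Γ) (a b : V), Γ.graph.Adj a b ∧
      C = leftCosetSet g (Subgroup.zpowers (artinDelta Γ a b))) ∨
    ∃ (g : ArtinGroup Γ) (a : V), Γ.StableVertex a ∧
      C = leftCosetSet g (Subgroup.zpowers (artinGen Γ a))

/-- The Hausdorff distance between `A` and `B` (w.r.t. the distance function `d`)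
is less than `D`. -/
def HausdorffClose {X : Type*} (d : X → X → ℝ) (D : ℝ) (A B : Set X) : Prop :=
  (∀ a ∈ A, ∃ b ∈ B, d a b < D) ∧ ∀ b ∈ B, ∃ a ∈ A, d a b < D

/-- Two subsets are parallel if they are at finite Hausdorff distance. -/
def CoarseParallel {X : Type*} (d : X → X → ℝ) (A B : Set X) : Prop :=
  ∃ D : ℝ, HausdorffClose d D A B

/-- A `2`-dimensional Artin group: every triangle with labels `p, q, r` satisfies
`1/p + 1/q + 1/r ≤ 1`. -/
def LabeledGraph.TwoDimensional {V : Type*} (Γ : LabeledGraph V) : Prop :=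
  ∀ a b c : V, Γ.graph.Adj a b → Γ.graph.Adj b c → Γ.graph.Adj a c →
    (1 / (Γ.label a b : ℚ)) + 1 / (Γ.label b c : ℚ) + 1 / (Γ.label a c : ℚ) ≤ 1

/-- The closed `r`-neighbourhood of a set w.r.t. a distance function. -/
def coarseNbhd {X : Type*} (d : X → X → ℝ) (r : ℝ) (S : Set X) : Set X :=
  { x | ∃ y ∈ S, d y x ≤ r }

section AltProd

theorem altProd_succ {G : Type*} [Monoid G] (n : ℕ) (x y : G) :
    altProd (n + 1) x y = x * altProd n y x := rfl

theorem altProd_two_mul {G : Type*} [Monoid G] (n : ℕ) (x y : G) :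
    altProd (2 * n) x y = (x * y) ^ n := by
  induction n with
  | zero => simp [altProd]
  | succ n ih => rw [mul_add, mul_one, altProd_succ, altProd_succ, ih, pow_succ', mul_assoc]

theorem altProd_two_mul_add_one {G : Type*} [Monoid G] (n : ℕ) (x y : G) :
    altProd (2 * n + 1) x y = (x * y) ^ n * x := by
  rw [altProd_succ, altProd_two_mul]
  induction n with
  | zero => simp
  | succ n ih => rw [pow_succ', pow_succ', mul_assoc, mul_assoc, ← ih]; simp only [mul_assoc]

theorem altProd_add_of_even {G : Type*} [Monoid G] {m : ℕ} (hm : Even m) (n : ℕ) (x y : G) :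
    altProd (m + n) x y = altProd m x y * altProd n x y := by
  obtain ⟨k, rfl⟩ := hm
  induction k with
  | zero => simp [altProd]
  | succ k ih =>
    rw [show k + 1 + (k + 1) + n = k + k + n + 1 + 1 by ring,
      show k + 1 + (k + 1) = k + k + 1 + 1 by ring]
    simp only [altProd_succ, ih, mul_assoc]

theorem altProd_add_of_odd {G : Type*} [Monoid G] {m : ℕ} (hm : Odd m) (n : ℕ) (x y : G) :
    altProd (m + n) x y = altProd m x y * altProd n y x := by
  obtain ⟨k, rfl⟩ := hm
  rw [show 2 * k + 1 + n = 2 * k + n + 1 by ring, altProd_succ, altProd_succ,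
    altProd_add_of_even (even_two_mul k), mul_assoc]

theorem map_altProd {G H : Type*} [Monoid G] [Monoid H] (f : G →* H) (n : ℕ) (x y : G) :
    f (altProd n x y) = altProd n (f x) (f y) := by
  induction n generalizing x y with
  | zero => simp [altProd]
  | succ n ih => simp [altProd_succ, ih]

theorem altProd_mul_self {G : Type*} [Monoid G] {m : ℕ} {x y : G}
    (h : altProd m x y = altProd m y x) :
    altProd m x y * altProd m x y = (x * y) ^ m := by
  rw [← altProd_two_mul, two_mul]
  rcases Nat.even_or_odd m with hm | hm
  · rw [altProd_add_of_even hm]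
  · rw [altProd_add_of_odd hm, ← h]

theorem commute_mul_pow_of_altProd_eq {G : Type*} [Monoid G] {m : ℕ} {x y : G}
    (h : altProd m x y = altProd m y x) : Commute ((x * y) ^ m) x := by
  have h' : (y * x) ^ m = (x * y) ^ m := by
    rw [← altProd_mul_self h, ← altProd_mul_self h.symm, h]
  change (x * y) ^ m * x = x * (x * y) ^ m
  rw [← altProd_two_mul_add_one, altProd_succ, altProd_two_mul, h']

theorem mul_altProd_of_odd {G : Type*} [Monoid G] {m : ℕ} {x y : G} (hm : Odd m)
    (h : altProd m x y = altProd m y x) : x * altProd m x y = altProd m x y * y := by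
  have := altProd_add_of_odd hm 1 x y
  rw [altProd_succ, ← h] at this
  simpa [altProd] using this

end AltProd

section ReflectionCount

variable {W : Type*} [Group W]

/-- The action of a group on integer-valued functions on it, by conjugation. -/
def conjFunAut (W : Type*) [Group W] : W →* MulAut (Multiplicative (W → ℤ)) where
  toFun w :=
    { toFun := fun F => Multiplicative.ofAdd fun t => F.toAdd (w⁻¹ * t * w)
      invFun := fun F => Multiplicative.ofAdd fun t => F.toAdd (w * t * w⁻¹)
      left_inv := fun F => by
        apply Multiplicative.toAdd.injective; funext t; simp [mul_assoc]
      right_inv := fun F => by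
        apply Multiplicative.toAdd.injective; funext t; simp [mul_assoc]
      map_mul' := fun F F' => rfl }
  map_one' := by
    refine MulEquiv.ext fun F => Multiplicative.toAdd.injective (funext fun t => ?_)
    simp
  map_mul' w w' := by
    refine MulEquiv.ext fun F => Multiplicative.toAdd.injective (funext fun t => ?_)
    simp [mul_assoc]

/-- The group recording, for a product of reflections, the product together with the signed
number of times each reflection is crossed. -/
abbrev CountGroup (W : Type*) [Group W] :=
  Multiplicative (W → ℤ) ⋊[conjFunAut W] W

/-- The signed number of times the reflection `t` is crossed. -/
def CountGroup.count (x : CountGroup W) (t : W) : ℤ := x.left.toAdd t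

theorem CountGroup.count_one (t : W) : (1 : CountGroup W).count t = 0 := rfl

theorem CountGroup.count_mul (x y : CountGroup W) (t : W) :
    (x * y).count t = x.count t + y.count (x.right⁻¹ * t * x.right) := rfl

theorem CountGroup.count_inv (x : CountGroup W) (t : W) :
    (x⁻¹).count t = -x.count (x.right * t * x.right⁻¹) := by
  change -(x.left.toAdd ((x.right⁻¹)⁻¹ * t * x.right⁻¹)) = _
  rw [inv_inv]; rfl

theorem CountGroup.ext_count {x y : CountGroup W} (h : ∀ t, x.count t = y.count t)
    (h' : x.right = y.right) : x = y :=
  SemidirectProduct.ext (Multiplicative.toAdd.injective (funext h)) h'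

open Classical in
/-- The element of `CountGroup W` crossing the reflection `s` once. -/
noncomputable def CountGroup.single (s : W) : CountGroup W :=
  ⟨Multiplicative.ofAdd (Pi.single s 1), s⟩

theorem CountGroup.right_single (s : W) : (single s).right = s := rfl

open Classical in
theorem CountGroup.count_single (s t : W) :
    (single s).count t = if t = s then 1 else 0 := by
  simp [single, count, Pi.single_apply]

theorem CountGroup.right_altProd (n : ℕ) (x y : CountGroup W) :
    (altProd n x y).right = altProd n x.right y.right :=
  map_altProd (SemidirectProduct.rightHom : CountGroup W →* W) n x y

open Classical in
theorem CountGroup.count_altProd_single (n : ℕ) {a b : W} (ha : a * a = 1) (hb : b * b = 1)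
    (t : W) :
    (altProd n (single a) (single b)).count t =
      ∑ k ∈ Finset.range n, if t = altProd (2 * k + 1) a b then 1 else 0 := by
  induction n generalizing a b t with
  | zero => simp [altProd, count_one]
  | succ n ih =>
    rw [altProd_succ, count_mul, count_single, right_single, ih hb ha, Finset.sum_range_succ',
      add_comm]
    congr 1
    · refine Finset.sum_congr rfl fun k _ => ?_
      refine if_congr ?_ rfl rfl
      have ha' : a⁻¹ = a := inv_eq_of_mul_eq_one_left ha
      have : altProd (2 * (k + 1) + 1) a b = a * altProd (2 * k + 1) b a * a := by
        rw [altProd_two_mul_add_one, altProd_two_mul_add_one, pow_succ', mul_assoc a b]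
        have h : b * (a * b) ^ k = (b * a) ^ k * b := by
          rw [← altProd_two_mul_add_one, altProd_succ, altProd_two_mul]
        rw [mul_assoc a, h, mul_assoc a]
      rw [this, ha']
      constructor
      · intro h; rw [← h]; simp only [mul_assoc, ha]; simp [← mul_assoc, ha]
      · rintro rfl; simp only [mul_assoc, ha]; simp [← mul_assoc, ha]
    · simp [altProd]

theorem altProd_comm_of_pow_eq_one {a b : W} (ha : a * a = 1) (hb : b * b = 1) {m : ℕ}
    (h : (a * b) ^ m = 1) : altProd m a b = altProd m b a := by
  have ha' : a⁻¹ = a := inv_eq_of_mul_eq_one_left ha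
  have hb' : b⁻¹ = b := inv_eq_of_mul_eq_one_left hb
  rcases Nat.even_or_odd' m with ⟨k, rfl | rfl⟩
  · rw [altProd_two_mul, altProd_two_mul]
    have : b * a = (a * b)⁻¹ := by rw [mul_inv_rev, ha', hb']
    rw [this, inv_pow, eq_inv_iff_mul_eq_one, ← pow_add, ← two_mul, h]
  · rw [altProd_two_mul_add_one, altProd_succ, altProd_two_mul]
    have : a * b = (b * a)⁻¹ := by rw [mul_inv_rev, ha', hb']
    have h2 : (a * b) ^ k * (a * (b * (a * b) ^ k)) = 1 := by
      rw [← mul_assoc a, ← pow_succ', ← pow_add, ← h]; congr 1; ring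
    rw [← mul_assoc] at h2
    rw [eq_inv_of_mul_eq_one_left h2, mul_inv_rev, hb', ← inv_pow, mul_inv_rev, ha', hb']
    rw [← altProd_two_mul_add_one, altProd_succ, altProd_two_mul]

/-- The elements `single a` and `single b` satisfy the Artin relations that `a` and `b` satisfy. -/
theorem CountGroup.altProd_single_comm {a b : W} (ha : a * a = 1) (hb : b * b = 1) {m : ℕ}
    (h : (a * b) ^ m = 1) :
    altProd m (single a) (single b) = altProd m (single b) (single a) := by
  classical
  refine ext_count (fun t => ?_) ?_
  · rw [count_altProd_single m ha hb, count_altProd_single m hb ha, ← Finset.sum_range_reflect]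
    refine Finset.sum_congr rfl fun k hk => if_congr ?_ rfl rfl
    rw [Finset.mem_range] at hk
    have : altProd (2 * (m - 1 - k) + 1) a b = altProd (2 * k + 1) b a := by
      have ha' : a⁻¹ = a := inv_eq_of_mul_eq_one_left ha
      have hb' : b⁻¹ = b := inv_eq_of_mul_eq_one_left hb
      have h1 : b * a = (a * b)⁻¹ := by rw [mul_inv_rev, ha', hb']
      have h2 : (a * b) ^ (m - 1 - k) * (a * b) ^ (k + 1) = 1 := by
        rw [← pow_add, ← h]; congr 1; omega
      rw [altProd_two_mul_add_one, altProd_two_mul_add_one, eq_inv_of_mul_eq_one_left h2, h1,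
        inv_pow, pow_succ', mul_inv_rev, mul_inv_rev, ha', hb', mul_assoc, mul_assoc, ha, mul_one]
    rw [this]
  · rw [right_altProd, right_altProd]
    exact altProd_comm_of_pow_eq_one ha hb h

end ReflectionCount

section TitsRepresentation

open Module Real

/-- Two reflections whose roots form the angle `π - π / m` generate a dihedral group of order
dividing `2 * m`. -/
theorem reflection_mul_reflection_pow_eq_one {M : Type*} [AddCommGroup M] [Module ℝ M]
    {x y : M} {f g : Dual ℝ M} (hf : f x = 2) (hg : g y = 2) {m : ℕ} (hm : 3 ≤ m)
    (hfy : f y = -2 * cos (π / m)) (hgx : g x = -2 * cos (π / m)) :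
    (reflection hf * reflection hg) ^ m = 1 := by
  have hm0 : (0 : ℝ) < m := by positivity
  have hm3 : (3 : ℝ) ≤ m := by exact_mod_cast hm
  set φ : ℝ := 2 * (π / m) with hφ
  have hmφ : (m : ℝ) * φ = 2 * π := by rw [hφ]; field_simp
  have hsin : sin φ ≠ 0 := by
    refine (sin_pos_of_pos_of_lt_pi (by positivity) ?_).ne'
    rw [hφ, ← mul_div_assoc, div_lt_iff₀ hm0]
    nlinarith [pi_pos]
  have ht : 2 * cos φ = f y * g x - 2 := by
    rw [hfy, hgx, hφ, cos_two_mul]; ring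
  have hS (k : ℤ) := Polynomial.Chebyshev.S_two_mul_real_cos φ k
  ext z
  rw [reflection_mul_reflection_pow_apply hf hg m z (2 * cos φ) ht]
  have hodd (k : ℕ) (hk : m = 2 * k + 1) :
      ((Polynomial.Chebyshev.S ℝ (k : ℤ)).eval (2 * cos φ) +
        (Polynomial.Chebyshev.S ℝ ((k : ℤ) - 1)).eval (2 * cos φ)) = 0 := by
    refine (mul_eq_zero.1 ?_).resolve_right hsin
    rw [add_mul, hS, hS]
    have : ((k : ℤ) + 1 : ℝ) * φ = 2 * π - (((k : ℤ) - 1 : ℤ) + 1 : ℝ) * φ := by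
      rw [← hmφ, hk]; push_cast; ring
    rw [this, sin_two_pi_sub]; ring
  have heven (k : ℕ) (hk : m = 2 * k) :
      (Polynomial.Chebyshev.S ℝ ((k : ℤ) - 1)).eval (2 * cos φ) = 0 := by
    refine (mul_eq_zero.1 ?_).resolve_right hsin
    have : (((k : ℤ) - 1 : ℤ) + 1 : ℝ) * φ = π := by
      have h2 : (2 * k : ℝ) * φ = 2 * π := by rw [← hmφ, hk]; push_cast; ring
      push_cast; linarith
    rw [hS, this, sin_pi]
  rcases Nat.even_or_odd' m with ⟨k, hk | hk⟩
  · have h1 : ((m : ℤ) - 2) / 2 = k - 1 := by omega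
    have h2 : ((m : ℤ) - 1) / 2 = k - 1 := by omega
    rw [h1, h2, heven k hk]; simp
  · have h1 : ((m : ℤ) - 2) / 2 = k - 1 := by omega
    have h2 : ((m : ℤ) - 1) / 2 = k := by omega
    have h3 : ((m : ℤ) - 3) / 2 = k - 1 := by omega
    have h4 : (m : ℤ) / 2 = k := by omega
    rw [h1, h2, h3, h4, hodd k hk]; simp

namespace LabeledGraph

variable {V : Type*} (Γ : LabeledGraph V)

open Classical in
/-- The coefficients of the coroots in the Tits representation. -/
noncomputable def titsCoeff (a b : V) : ℝ :=
  if a = b then 2 else if Γ.graph.Adj a b then -2 * cos (π / Γ.label a b) else 0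

theorem titsCoeff_self (a : V) : Γ.titsCoeff a a = 2 := if_pos rfl

theorem titsCoeff_of_adj {a b : V} (h : Γ.graph.Adj a b) :
    Γ.titsCoeff a b = -2 * cos (π / Γ.label a b) := by
  rw [titsCoeff, if_neg h.ne, if_pos h]

/-- The coroot of a vertex in the Tits representation. -/
noncomputable def coroot (a : V) : Dual ℝ (V →₀ ℝ) :=
  Finsupp.linearCombination ℝ (Γ.titsCoeff a)

theorem coroot_single (a b : V) : Γ.coroot a (Finsupp.single b 1) = Γ.titsCoeff a b := by
  simp [coroot]

theorem coroot_self (a : V) : Γ.coroot a (Finsupp.single a 1) = 2 := by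
  rw [coroot_single, titsCoeff_self]

/-- The reflection of a vertex in the Tits representation. -/
noncomputable def refl (a : V) : (V →₀ ℝ) ≃ₗ[ℝ] (V →₀ ℝ) :=
  reflection (Γ.coroot_self a)

theorem refl_apply (a : V) (z : V →₀ ℝ) :
    Γ.refl a z = z - Γ.coroot a z • Finsupp.single a 1 := rfl

theorem refl_mul_self (a : V) : Γ.refl a * Γ.refl a = 1 :=
  LinearEquiv.ext fun z => involutive_reflection (Γ.coroot_self a) z

theorem refl_mul_refl_pow {a b : V} (h : Γ.graph.Adj a b) (hm : 3 ≤ Γ.label a b) :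
    (Γ.refl a * Γ.refl b) ^ Γ.label a b = 1 := by
  refine reflection_mul_reflection_pow_eq_one _ _ hm ?_ ?_
  · rw [coroot_single, titsCoeff_of_adj _ h]
  · rw [coroot_single, titsCoeff_of_adj _ h.symm, label_symm]

theorem refl_apply_of_ne {a b : V} (h : a ≠ b) (z : V →₀ ℝ) : Γ.refl a z b = z b := by
  simp [refl_apply, h]

theorem altProd_refl_apply {a c b : V} (ha : a ≠ b) (hc : c ≠ b) (n : ℕ) (z : V →₀ ℝ) :
    altProd n (Γ.refl a) (Γ.refl c) z b = z b := by
  induction n generalizing a c with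
  | zero => simp [altProd]
  | succ n ih => rw [altProd_succ, LinearEquiv.mul_apply, refl_apply_of_ne _ ha, ih hc ha]

theorem altProd_refl_ne {a c b : V} (ha : a ≠ b) (hc : c ≠ b) (n : ℕ) :
    Γ.refl b ≠ altProd n (Γ.refl a) (Γ.refl c) := by
  intro h
  have := Γ.altProd_refl_apply ha hc n (Finsupp.single b 1)
  rw [← h, refl_apply, coroot_self] at this
  norm_num at this

theorem refl_ne_refl {a b : V} (h : a ≠ b) : Γ.refl b ≠ Γ.refl a := by
  have := Γ.altProd_refl_ne h h 1
  simpa [altProd] using this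

theorem refl_mul_refl_mul_refl_ne {a b : V} (h : Γ.graph.Adj a b) (hm : 3 ≤ Γ.label a b) :
    Γ.refl a * Γ.refl b * Γ.refl a ≠ Γ.refl b := by
  intro heq
  have hc : 0 < cos (π / Γ.label a b) := by
    have hm3 : (3 : ℝ) ≤ Γ.label a b := by exact_mod_cast hm
    refine cos_pos_of_mem_Ioo ⟨by linarith [show 0 ≤ π / Γ.label a b by positivity, pi_pos], ?_⟩
    exact div_lt_div_of_pos_left pi_pos two_pos (by linarith)
  have heq' : Γ.refl a * Γ.refl b = Γ.refl b * Γ.refl a := by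
    conv_rhs => rw [← heq]
    rw [mul_assoc (Γ.refl a * Γ.refl b), refl_mul_self, mul_one]
  have := DFunLike.congr_fun (DFunLike.congr_fun heq' (Finsupp.single b 1)) a
  simp only [LinearEquiv.mul_apply, refl_apply, coroot_single, titsCoeff_self, map_sub, map_smul,
    titsCoeff_of_adj _ h, Finsupp.sub_apply, Finsupp.smul_apply, Finsupp.single_eq_same,
    Finsupp.single_eq_of_ne h.ne, smul_eq_mul] at this
  linarith

end LabeledGraph

end TitsRepresentation

section WordMetric

variable {G : Type*} [Group G] {S : Set G}

theorem wordLength_prod_le {l : List G} (hl : ∀ x ∈ l, x ∈ S ∨ x⁻¹ ∈ S) :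
    wordLength S l.prod ≤ l.length :=
  Nat.sInf_le ⟨l, rfl, hl, rfl⟩

theorem wordLength_one : wordLength S (1 : G) = 0 :=
  Nat.le_zero.1 (wordLength_prod_le (l := []) (by simp))

theorem exists_list_of_closure_eq_top (hS : Subgroup.closure S = ⊤) (g : G) :
    ∃ l : List G, l.length = wordLength S g ∧ (∀ x ∈ l, x ∈ S ∨ x⁻¹ ∈ S) ∧ l.prod = g := by
  have hg : g ∈ Subgroup.closure S := hS ▸ Subgroup.mem_top g
  rw [← Subgroup.mem_toSubmonoid, Subgroup.closure_toSubmonoid] at hg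
  obtain ⟨l, hl, hprod⟩ := Submonoid.exists_list_of_mem_closure hg
  exact Nat.sInf_mem (s := { n | ∃ l : List G, l.length = n ∧ (∀ x ∈ l, x ∈ S ∨ x⁻¹ ∈ S) ∧
    l.prod = g }) ⟨_, l, rfl, hl, hprod⟩

theorem wordLength_mul_le (hS : Subgroup.closure S = ⊤) (g h : G) :
    wordLength S (g * h) ≤ wordLength S g + wordLength S h := by
  obtain ⟨l, hl, hlS, rfl⟩ := exists_list_of_closure_eq_top hS g
  obtain ⟨l', hl', hlS', rfl⟩ := exists_list_of_closure_eq_top hS h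
  rw [← hl, ← hl', ← List.length_append, ← List.prod_append]
  refine wordLength_prod_le fun x hx => ?_
  rcases List.mem_append.1 hx with hx | hx
  exacts [hlS x hx, hlS' x hx]

theorem wordLength_inv_le (hS : Subgroup.closure S = ⊤) (g : G) :
    wordLength S g⁻¹ ≤ wordLength S g := by
  obtain ⟨l, hl, hlS, rfl⟩ := exists_list_of_closure_eq_top hS g
  rw [← hl, List.prod_inv_reverse]
  refine (wordLength_prod_le fun x hx => ?_).trans_eq (by simp)
  rw [List.mem_reverse, List.mem_map] at hx
  obtain ⟨y, hy, rfl⟩ := hx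
  rw [inv_inv]
  exact (hlS y hy).symm

theorem wordLength_inv (hS : Subgroup.closure S = ⊤) (g : G) :
    wordLength S g⁻¹ = wordLength S g :=
  le_antisymm (wordLength_inv_le hS g) (by simpa using wordLength_inv_le hS g⁻¹)

theorem wordLength_zpow_le (hS : Subgroup.closure S = ⊤) (g : G) (n : ℤ) :
    wordLength S (g ^ n) ≤ n.natAbs * wordLength S g := by
  have h (k : ℕ) : wordLength S (g ^ k) ≤ k * wordLength S g := by
    induction k with
    | zero => simp [wordLength_one]
    | succ k ih =>
      rw [pow_succ, add_mul, one_mul]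
      exact (wordLength_mul_le hS _ _).trans (by gcongr)
  obtain ⟨k, rfl | rfl⟩ := n.eq_nat_or_neg
  · simpa using h k
  · simpa [wordLength_inv hS] using h k

theorem finite_wordLength_le (hS : Subgroup.closure S = ⊤) (hfin : S.Finite) (n : ℕ) :
    {g : G | wordLength S g ≤ n}.Finite := by
  have hT : (S ∪ S⁻¹).Finite := hfin.union hfin.inv
  have := hT.to_subtype
  refine ((List.finite_length_le (↥(S ∪ S⁻¹)) n).image
    fun l => (l.map Subtype.val).prod).subset fun g hg => ?_
  obtain ⟨l, hl, hlS, rfl⟩ := exists_list_of_closure_eq_top hS g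
  lift l to List (↥(S ∪ S⁻¹)) using hlS
  exact ⟨l, by rw [Set.mem_ofPred_eq, ← hl, List.length_map] at hg; exact hg, rfl⟩

theorem wordDist_mul_left (g x y : G) : wordDist S (g * x) (g * y) = wordDist S x y := by
  simp [wordDist, mul_assoc]

theorem wordDist_self (x : G) : wordDist S x x = 0 := by
  simp [wordDist, wordLength_one]

theorem wordDist_triangle (hS : Subgroup.closure S = ⊤) (x y z : G) :
    wordDist S x z ≤ wordDist S x y + wordDist S y z := by
  have := wordLength_mul_le hS (x⁻¹ * y) (y⁻¹ * z)
  rw [mul_assoc, mul_inv_cancel_left] at this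
  unfold wordDist
  exact_mod_cast this

end WordMetric

section Quasiflats

variable {G : Type*} [Group G] {S : Set G}

/-- `C` is the coarse intersection of three `(A, A)`-quasiflats, with error function `k`. -/
def IsQuasiflatIntersection (S : Set G) (A : ℝ) (k : ℝ → ℝ) (C : Set G) : Prop :=
  ∃ Q₁ Q₂ Q₃ : Set G,
    (∃ f₁ : EuclideanSpace ℝ (Fin 2) → G,
      IsQIEmbedding A A (fun x y => dist x y) (wordDist S) f₁ ∧ Set.range f₁ = Q₁) ∧
    (∃ f₂ : EuclideanSpace ℝ (Fin 2) → G,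
      IsQIEmbedding A A (fun x y => dist x y) (wordDist S) f₂ ∧ Set.range f₂ = Q₂) ∧
    (∃ f₃ : EuclideanSpace ℝ (Fin 2) → G,
      IsQIEmbedding A A (fun x y => dist x y) (wordDist S) f₃ ∧ Set.range f₃ = Q₃) ∧
    ∀ r : ℝ, A ≤ r →
      HausdorffClose (wordDist S) (k r) C
        (coarseNbhd (wordDist S) r Q₁ ∩ coarseNbhd (wordDist S) r Q₂ ∩
          coarseNbhd (wordDist S) r Q₃)

theorem IsQIEmbedding.mono {X Y : Type*} {A A' : ℝ} {dX : X → X → ℝ} {dY : Y → Y → ℝ} {q : X → Y}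
    (h : IsQIEmbedding A A dX dY q) (hX : ∀ x y, 0 ≤ dX x y) (hA : 0 < A) (hAA' : A ≤ A') :
    IsQIEmbedding A' A' dX dY q := fun x y => by
  obtain ⟨h1, h2⟩ := h x y
  have h3 : dX x y / A' ≤ dX x y / A := div_le_div_of_nonneg_left (hX x y) hA hAA'
  have h4 : A * dX x y ≤ A' * dX x y := mul_le_mul_of_nonneg_right hAA' (hX x y)
  exact ⟨by linarith, by linarith⟩

theorem IsQIEmbedding.mul_left {X : Type*} {L A : ℝ} {dX : X → X → ℝ} {q : X → G}
    (h : IsQIEmbedding L A dX (wordDist S) q) (g : G) :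
    IsQIEmbedding L A dX (wordDist S) (fun x => g * q x) := fun x y => by
  simpa only [wordDist_mul_left] using h x y

theorem HausdorffClose.mono {X : Type*} {d : X → X → ℝ} {D D' : ℝ} {A B : Set X}
    (h : HausdorffClose d D A B) (hD : D ≤ D') : HausdorffClose d D' A B :=
  ⟨fun a ha => (h.1 a ha).imp fun _ hb => ⟨hb.1, hb.2.trans_le hD⟩,
    fun b hb => (h.2 b hb).imp fun _ ha => ⟨ha.1, ha.2.trans_le hD⟩⟩

theorem HausdorffClose.trans (hS : Subgroup.closure S = ⊤) {D D' : ℝ} {A B C : Set G}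
    (h : HausdorffClose (wordDist S) D A B) (h' : HausdorffClose (wordDist S) D' B C) :
    HausdorffClose (wordDist S) (D + D') A C := by
  constructor
  · intro a ha
    obtain ⟨b, hb, hab⟩ := h.1 a ha
    obtain ⟨c, hc, hbc⟩ := h'.1 b hb
    exact ⟨c, hc, (wordDist_triangle hS a b c).trans_lt (add_lt_add hab hbc)⟩
  · intro c hc
    obtain ⟨b, hb, hbc⟩ := h'.2 c hc
    obtain ⟨a, ha, hab⟩ := h.2 b hb
    exact ⟨a, ha, (wordDist_triangle hS a b c).trans_lt (add_lt_add hab hbc)⟩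

theorem HausdorffClose.mul_left {D : ℝ} {A B : Set G}
    (h : HausdorffClose (wordDist S) D A B) (g : G) :
    HausdorffClose (wordDist S) D ((g * ·) '' A) ((g * ·) '' B) := by
  constructor
  · rintro _ ⟨a, ha, rfl⟩
    obtain ⟨b, hb, hab⟩ := h.1 a ha
    exact ⟨_, ⟨b, hb, rfl⟩, by simpa only [wordDist_mul_left] using hab⟩
  · rintro _ ⟨b, hb, rfl⟩
    obtain ⟨a, ha, hab⟩ := h.2 b hb
    exact ⟨_, ⟨a, ha, rfl⟩, by simpa only [wordDist_mul_left] using hab⟩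

theorem coarseNbhd_mul_left (r : ℝ) (Q : Set G) (g : G) :
    coarseNbhd (wordDist S) r ((g * ·) '' Q) = (g * ·) '' coarseNbhd (wordDist S) r Q := by
  ext x
  constructor
  · rintro ⟨_, ⟨y, hy, rfl⟩, hyx⟩
    refine ⟨g⁻¹ * x, ⟨y, hy, ?_⟩, by simp⟩
    rwa [← wordDist_mul_left g, mul_inv_cancel_left]
  · rintro ⟨x, ⟨y, hy, hyx⟩, rfl⟩
    exact ⟨_, ⟨y, hy, rfl⟩, by simpa only [wordDist_mul_left] using hyx⟩

theorem IsQuasiflatIntersection.mono {A A' : ℝ} {k k' : ℝ → ℝ} {C : Set G}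
    (h : IsQuasiflatIntersection S A k C) (hA : 0 < A) (hAA' : A ≤ A') (hk : ∀ r, k r ≤ k' r) :
    IsQuasiflatIntersection S A' k' C := by
  obtain ⟨Q₁, Q₂, Q₃, ⟨f₁, h₁, e₁⟩, ⟨f₂, h₂, e₂⟩, ⟨f₃, h₃, e₃⟩, h⟩ := h
  have hd (x y : EuclideanSpace ℝ (Fin 2)) : 0 ≤ dist x y := dist_nonneg
  exact ⟨Q₁, Q₂, Q₃, ⟨f₁, h₁.mono hd hA hAA', e₁⟩, ⟨f₂, h₂.mono hd hA hAA', e₂⟩,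
    ⟨f₃, h₃.mono hd hA hAA', e₃⟩, fun r hr => (h r (hAA'.trans hr)).mono (hk r)⟩

theorem IsQuasiflatIntersection.mul_left {A : ℝ} {k : ℝ → ℝ} {C : Set G}
    (h : IsQuasiflatIntersection S A k C) (g : G) :
    IsQuasiflatIntersection S A k ((g * ·) '' C) := by
  obtain ⟨Q₁, Q₂, Q₃, ⟨f₁, h₁, e₁⟩, ⟨f₂, h₂, e₂⟩, ⟨f₃, h₃, e₃⟩, h⟩ := h
  refine ⟨(g * ·) '' Q₁, (g * ·) '' Q₂, (g * ·) '' Q₃, ⟨_, h₁.mul_left g, ?_⟩,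
    ⟨_, h₂.mul_left g, ?_⟩, ⟨_, h₃.mul_left g, ?_⟩, fun r hr => ?_⟩
  · rw [← e₁, ← Set.range_comp]; rfl
  · rw [← e₂, ← Set.range_comp]; rfl
  · rw [← e₃, ← Set.range_comp]; rfl
  · have hinj : Function.Injective (g * ·) := mul_right_injective g
    rw [coarseNbhd_mul_left, coarseNbhd_mul_left, coarseNbhd_mul_left, ← Set.image_inter hinj,
      ← Set.image_inter hinj]
    exact (h r hr).mul_left g

theorem IsQuasiflatIntersection.of_hausdorffClose (hS : Subgroup.closure S = ⊤) {A D : ℝ}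
    {k : ℝ → ℝ} {C C' : Set G} (h : IsQuasiflatIntersection S A k C)
    (hC : HausdorffClose (wordDist S) D C' C) :
    IsQuasiflatIntersection S A (fun r => D + k r) C' := by
  obtain ⟨Q₁, Q₂, Q₃, h₁, h₂, h₃, h⟩ := h
  exact ⟨Q₁, Q₂, Q₃, h₁, h₂, h₃, fun r hr => hC.trans hS (h r hr)⟩

/-- The subgroup of products of powers of two commuting elements. -/
def Commute.zpowersMul {x z : G} (h : Commute x z) : Subgroup G where
  carrier := {g | ∃ i j : ℤ, g = x ^ i * z ^ j}
  one_mem' := ⟨0, 0, by simp⟩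
  mul_mem' := by
    rintro _ _ ⟨i, j, rfl⟩ ⟨i', j', rfl⟩
    refine ⟨i + i', j + j', ?_⟩
    rw [zpow_add, zpow_add, mul_assoc, ← mul_assoc (z ^ j), ((h.zpow_zpow i' j).eq).symm]
    simp only [mul_assoc]
  inv_mem' := by
    rintro _ ⟨i, j, rfl⟩
    exact ⟨-i, -j, by rw [mul_inv_rev, zpow_neg, zpow_neg, ((h.zpow_zpow i j).inv_inv).eq]⟩

theorem Commute.mem_zpowersMul {x z g : G} (h : Commute x z) :
    g ∈ h.zpowersMul ↔ ∃ i j : ℤ, g = x ^ i * z ^ j := Iff.rfl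

/-- An undistorted copy of `ℤ²` is the image of a quasi-isometric embedding of the plane. -/
theorem Commute.exists_isQIEmbedding (hS : Subgroup.closure S = ⊤) {x z : G} (h : Commute x z)
    {K : ℝ} (hK : 0 ≤ K)
    (hxz : ∀ i j : ℤ, |(i : ℝ)| + |(j : ℝ)| ≤ K * wordLength S (x ^ i * z ^ j)) :
    ∃ A : ℝ, 0 < A ∧ ∃ f : EuclideanSpace ℝ (Fin 2) → G,
      IsQIEmbedding A A (fun x y => dist x y) (wordDist S) f ∧
        Set.range f = (h.zpowersMul : Set G) := by
  set L : ℝ := wordLength S x + wordLength S z with hL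
  have hL0 : 0 ≤ L := by positivity
  refine ⟨K + 2 * L + 2, by positivity, fun p => x ^ ⌊p 0⌋ * z ^ ⌊p 1⌋, fun p q => ?_, ?_⟩
  · have hdiff : (x ^ ⌊p 0⌋ * z ^ ⌊p 1⌋)⁻¹ * (x ^ ⌊q 0⌋ * z ^ ⌊q 1⌋) =
        x ^ (⌊q 0⌋ - ⌊p 0⌋) * z ^ (⌊q 1⌋ - ⌊p 1⌋) := by
      have hc := (h.symm.zpow_zpow (-⌊p 1⌋) (-⌊p 0⌋ + ⌊q 0⌋)).eq
      rw [sub_eq_neg_add, sub_eq_neg_add, zpow_add z, ← mul_assoc (x ^ _), ← hc, zpow_add x,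
        mul_inv_rev, zpow_neg, zpow_neg]
      simp only [mul_assoc]
    have hfloor (s t : ℝ) : |((⌊t⌋ - ⌊s⌋ : ℤ) : ℝ)| ≤ |s - t| + 1 ∧
        |s - t| ≤ |((⌊t⌋ - ⌊s⌋ : ℤ) : ℝ)| + 1 := by
      have h1 := Int.floor_le s
      have h2 := Int.lt_floor_add_one s
      have h3 := Int.floor_le t
      have h4 := Int.lt_floor_add_one t
      push_cast
      constructor
      · rw [abs_le]; constructor <;> cases abs_cases (s - t) <;> linarith
      · rw [abs_le]
        constructor <;> cases abs_cases ((⌊t⌋ : ℝ) - ⌊s⌋) <;> linarith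
    obtain ⟨h0, h1, h01⟩ : |p 0 - q 0| ≤ dist p q ∧ |p 1 - q 1| ≤ dist p q ∧
        dist p q ≤ |p 0 - q 0| + |p 1 - q 1| := by
      have hdist : dist p q = √(|p 0 - q 0| ^ 2 + |p 1 - q 1| ^ 2) := by
        rw [EuclideanSpace.dist_eq]; simp [Real.dist_eq]
      rw [hdist]
      have hu := abs_nonneg (p 0 - q 0)
      have hv := abs_nonneg (p 1 - q 1)
      generalize |p 0 - q 0| = u at hu ⊢
      generalize |p 1 - q 1| = v at hv ⊢
      have huv : 0 ≤ u * v := by positivity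
      refine ⟨Real.le_sqrt_of_sq_le ?_, Real.le_sqrt_of_sq_le ?_,
        Real.sqrt_le_iff.2 ⟨by positivity, ?_⟩⟩ <;> nlinarith
    simp only [wordDist, hdiff]
    set i := ⌊q 0⌋ - ⌊p 0⌋ with hi
    set j := ⌊q 1⌋ - ⌊p 1⌋ with hj
    have hi' := hfloor (p 0) (q 0)
    have hj' := hfloor (p 1) (q 1)
    rw [← hi] at hi'
    rw [← hj] at hj'
    have hlow := hxz i j
    have hup : (wordLength S (x ^ i * z ^ j) : ℝ) ≤ (dist p q + 1) * L := by
      have h2 : (wordLength S (x ^ i * z ^ j) : ℝ) ≤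
          |(i : ℝ)| * wordLength S x + |(j : ℝ)| * wordLength S z := by
        have := (wordLength_mul_le hS (x ^ i) (z ^ j)).trans
          (add_le_add (wordLength_zpow_le hS x i) (wordLength_zpow_le hS z j))
        rw [← Int.cast_abs, ← Int.cast_abs, Int.abs_eq_natAbs, Int.abs_eq_natAbs]
        exact_mod_cast this
      refine h2.trans ?_
      rw [hL, mul_add]
      exact add_le_add
        (mul_le_mul_of_nonneg_right (by linarith [hi'.1]) (Nat.cast_nonneg _))
        (mul_le_mul_of_nonneg_right (by linarith [hj'.1]) (Nat.cast_nonneg _))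
    have hn : (0 : ℝ) ≤ wordLength S (x ^ i * z ^ j) := Nat.cast_nonneg _
    have hd : 0 ≤ dist p q := dist_nonneg
    set n : ℝ := (wordLength S (x ^ i * z ^ j) : ℝ)
    constructor
    · rw [sub_le_iff_le_add, div_le_iff₀ (by positivity)]
      have : dist p q ≤ K * n + 2 := by linarith [hi'.2, hj'.2]
      have hLn : 0 ≤ L * n := by positivity
      have hLK : 0 ≤ L * K := by positivity
      have hLL : 0 ≤ L * L := by positivity
      have hKK : 0 ≤ K * K := by positivity
      nlinarith
    · have hLd : 0 ≤ L * dist p q := by positivity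
      have hKd : 0 ≤ K * dist p q := by positivity
      nlinarith
  · ext g
    rw [SetLike.mem_coe, h.mem_zpowersMul]
    constructor
    · rintro ⟨p, rfl⟩
      exact ⟨_, _, rfl⟩
    · rintro ⟨i, j, rfl⟩
      exact ⟨!₂[(i : ℝ), (j : ℝ)], by simp⟩

theorem exists_wordDist_le_of_mem_coarseNbhd (hS : Subgroup.closure S = ⊤) (hfin : S.Finite)
    (H K : Subgroup G) (r : ℝ) :
    ∃ D : ℝ, 0 ≤ D ∧ ∀ g ∈ coarseNbhd (wordDist S) r (H : Set G) ∩
      coarseNbhd (wordDist S) r (K : Set G), ∃ x ∈ H ⊓ K, wordDist S x g ≤ D := by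
  set B : Set G := {g | (wordLength S g : ℝ) ≤ r} with hB
  have hBfin : B.Finite := by
    refine (finite_wordLength_le hS hfin ⌊r⌋₊).subset fun g hg => ?_
    exact Nat.le_floor hg
  have hex (p : G × G) : ∃ g₀ : G, (∃ g, g * p.1⁻¹ ∈ H ∧ g * p.2⁻¹ ∈ K) →
      g₀ * p.1⁻¹ ∈ H ∧ g₀ * p.2⁻¹ ∈ K := by
    by_cases hp : ∃ g, g * p.1⁻¹ ∈ H ∧ g * p.2⁻¹ ∈ K
    · exact hp.imp fun g hg _ => hg
    · exact ⟨1, fun h => absurd h hp⟩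
  choose g₀ hg₀ using hex
  obtain ⟨D, hD⟩ := ((hBfin.prod hBfin).image fun p => wordLength S (g₀ p)).bddAbove
  refine ⟨D, Nat.cast_nonneg _, ?_⟩
  rintro g ⟨⟨h, hh, hhg⟩, ⟨k, hk, hkg⟩⟩
  obtain ⟨h1, h2⟩ := hg₀ (h⁻¹ * g, k⁻¹ * g) ⟨g, by simpa using hh, by simpa using hk⟩
  refine ⟨g * (g₀ (h⁻¹ * g, k⁻¹ * g))⁻¹, ⟨?_, ?_⟩, ?_⟩
  · have := H.mul_mem hh (H.inv_mem h1)
    simpa [mul_assoc] using this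
  · have := K.mul_mem hk (K.inv_mem h2)
    simpa [mul_assoc] using this
  · have : (g * (g₀ (h⁻¹ * g, k⁻¹ * g))⁻¹)⁻¹ * g = g₀ (h⁻¹ * g, k⁻¹ * g) := by simp
    rw [wordDist, this]
    exact_mod_cast hD ⟨(h⁻¹ * g, k⁻¹ * g), ⟨hhg, hkg⟩, rfl⟩

/-- The intersection of two subgroups that are quasiflats is a coarse intersection of
quasiflats. -/
theorem exists_isQuasiflatIntersection_inf (hS : Subgroup.closure S = ⊤) (hfin : S.Finite)
    (H K : Subgroup G)
    (hH : ∃ A : ℝ, 0 < A ∧ ∃ f : EuclideanSpace ℝ (Fin 2) → G,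
      IsQIEmbedding A A (fun x y => dist x y) (wordDist S) f ∧ Set.range f = (H : Set G))
    (hK : ∃ A : ℝ, 0 < A ∧ ∃ f : EuclideanSpace ℝ (Fin 2) → G,
      IsQIEmbedding A A (fun x y => dist x y) (wordDist S) f ∧ Set.range f = (K : Set G)) :
    ∃ A : ℝ, 0 < A ∧ ∃ k : ℝ → ℝ, (∀ r, 0 < k r) ∧
      IsQuasiflatIntersection S A k ((H ⊓ K : Subgroup G) : Set G) := by
  obtain ⟨A, hA, f, hf, hfH⟩ := hH
  obtain ⟨A', hA', f', hf', hfK⟩ := hK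
  choose D hD0 hD using exists_wordDist_le_of_mem_coarseNbhd hS hfin H K
  have hd (x y : EuclideanSpace ℝ (Fin 2)) : 0 ≤ dist x y := dist_nonneg
  have hm := hf.mono hd hA (le_max_left A A')
  have hm' := hf'.mono hd hA' (le_max_right A A')
  have hA0 : 0 < max A A' := lt_max_of_lt_left hA
  refine ⟨max A A', hA0, fun r => D r + 1, fun r => by linarith [hD0 r], H, K, K, ⟨f, hm, hfH⟩,
    ⟨f', hm', hfK⟩, ⟨f', hm', hfK⟩, fun r hr => ⟨fun c hc => ?_, fun b hb => ?_⟩⟩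
  · have hr0 : wordDist S c c ≤ r := by rw [wordDist_self]; linarith
    refine ⟨c, ⟨⟨⟨c, hc.1, hr0⟩, ⟨c, hc.2, hr0⟩⟩, ⟨c, hc.2, hr0⟩⟩, ?_⟩
    rw [wordDist_self]; linarith [hD0 r]
  · obtain ⟨x, hx, hxb⟩ := hD r b hb.1
    exact ⟨x, hx, by linarith⟩

end Quasiflats

section CountPowers

variable {W : Type*} [Group W]

namespace CountGroup

theorem count_pow {u : CountGroup W} (hu : ∀ t, u.count (u.right⁻¹ * t * u.right) = u.count t)
    (n : ℕ) (t : W) : (u ^ n).count t = n * u.count t := by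
  induction n generalizing t with
  | zero => simp [count_one]
  | succ n ih => rw [pow_succ', count_mul, ih, hu]; push_cast; ring

theorem count_zpow {u : CountGroup W} (hu : ∀ t, u.count (u.right⁻¹ * t * u.right) = u.count t)
    (n : ℤ) (t : W) : (u ^ n).count t = n * u.count t := by
  have hinv (t : W) : (u⁻¹).count t = -u.count t := by
    rw [count_inv, ← hu]; simp [mul_assoc]
  have hu' (t : W) : (u⁻¹).count ((u⁻¹).right⁻¹ * t * (u⁻¹).right) = (u⁻¹).count t := by
    rw [hinv, hinv, ← hu, SemidirectProduct.inv_right]; simp [mul_assoc]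
  obtain ⟨k, rfl | rfl⟩ := n.eq_nat_or_neg
  · simpa using count_pow hu k t
  · rw [zpow_neg, ← inv_zpow, zpow_natCast, count_pow hu', hinv]; ring

theorem count_single_zpow {s : W} (n : ℤ) (t : W) [Decidable (t = s)] :
    (single s ^ n).count t = if t = s then n else 0 := by
  classical
  rw [count_zpow, count_single]
  · simp
  · intro t
    rw [count_single, count_single, right_single]
    refine if_congr ?_ rfl rfl
    rw [mul_assoc, inv_mul_eq_iff_eq_mul, mul_left_inj]

theorem right_single_mul_single_pow (a b : W) (m : ℕ) :
    ((single a * single b) ^ m).right = (a * b) ^ m := by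
  rw [← altProd_two_mul, right_altProd, altProd_two_mul, right_single, right_single]

open Classical in
theorem count_single_mul_single_pow {a b : W} (ha : a * a = 1) (hb : b * b = 1) (m : ℕ) (t : W) :
    ((single a * single b) ^ m).count t =
      ∑ k ∈ Finset.range (2 * m), if t = altProd (2 * k + 1) a b then 1 else 0 := by
  rw [← altProd_two_mul, count_altProd_single _ ha hb]

theorem count_single_mul_single_pow_pos {a b : W} (ha : a * a = 1) (hb : b * b = 1) {m k : ℕ}
    (hk : k < 2 * m) : 0 < ((single a * single b) ^ m).count (altProd (2 * k + 1) a b) := by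
  classical
  rw [count_single_mul_single_pow ha hb]
  refine Finset.sum_pos' (fun i _ => ?_) ⟨k, Finset.mem_range.2 hk, by simp⟩
  split_ifs <;> simp

theorem count_single_mul_single_pow_eq_zero {a b t : W} (ha : a * a = 1) (hb : b * b = 1) {m : ℕ}
    (ht : ∀ k, t ≠ altProd k a b) : ((single a * single b) ^ m).count t = 0 := by
  classical
  rw [count_single_mul_single_pow ha hb]
  exact Finset.sum_eq_zero fun k _ => if_neg (ht _)

end CountGroup

end CountPowers

section ArtinCount

open CountGroup

variable {V : Type*} (Γ : LabeledGraph V)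

theorem closure_range_artinGen : Subgroup.closure (Set.range (artinGen Γ)) = ⊤ :=
  PresentedGroup.closure_range_of _

theorem altProd_artinGen_comm {a b : V} (h : Γ.graph.Adj a b) :
    altProd (Γ.label a b) (artinGen Γ a) (artinGen Γ b) =
      altProd (Γ.label a b) (artinGen Γ b) (artinGen Γ a) := by
  have hrel : altProd (Γ.label a b) (FreeGroup.of a) (FreeGroup.of b) *
      (altProd (Γ.label a b) (FreeGroup.of b) (FreeGroup.of a))⁻¹ ∈ Γ.artinRels := ⟨a, b, h, rfl⟩
  have := PresentedGroup.one_of_mem hrel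
  rwa [map_mul, map_inv, mul_inv_eq_one, map_altProd, map_altProd] at this

/-- The homomorphism counting how often words in the Artin group cross each reflection. -/
noncomputable def artinCountHom (h3 : ∀ ⦃a b⦄, Γ.graph.Adj a b → 3 ≤ Γ.label a b) :
    ArtinGroup Γ →* CountGroup ((V →₀ ℝ) ≃ₗ[ℝ] (V →₀ ℝ)) :=
  PresentedGroup.toGroup (f := fun v => single (Γ.refl v)) <| by
    rintro _ ⟨a, b, h, rfl⟩
    rw [map_mul, map_inv, mul_inv_eq_one, map_altProd, map_altProd, FreeGroup.lift_apply_of,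
      FreeGroup.lift_apply_of]
    exact altProd_single_comm (Γ.refl_mul_self a) (Γ.refl_mul_self b)
      (Γ.refl_mul_refl_pow h (h3 h))

/-- The generator `(ab) ^ m` of the center (or of an index two subgroup of it) of the dihedral
Artin group associated to an edge. -/
def artinCentral (a b : V) : ArtinGroup Γ :=
  (artinGen Γ a * artinGen Γ b) ^ Γ.label a b

variable {Γ} (h3 : ∀ ⦃a b⦄, Γ.graph.Adj a b → 3 ≤ Γ.label a b)

theorem artinCountHom_artinGen (v : V) :
    artinCountHom Γ h3 (artinGen Γ v) = single (Γ.refl v) :=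
  PresentedGroup.toGroup.of _

theorem artinCountHom_artinCentral (a b : V) :
    artinCountHom Γ h3 (artinCentral Γ a b) =
      (single (Γ.refl a) * single (Γ.refl b)) ^ Γ.label a b := by
  rw [artinCentral, map_pow, map_mul, artinCountHom_artinGen, artinCountHom_artinGen]

theorem abs_count_artinCountHom_le (g : ArtinGroup Γ) (t : (V →₀ ℝ) ≃ₗ[ℝ] (V →₀ ℝ)) :
    |(artinCountHom Γ h3 g).count t| ≤ wordLength (Set.range (artinGen Γ)) g := by
  obtain ⟨l, hl, hlS, rfl⟩ := exists_list_of_closure_eq_top (closure_range_artinGen Γ) g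
  rw [← hl]
  clear hl
  induction l generalizing t with
  | nil => simp [count_one]
  | cons x l ih =>
    have hx : |(artinCountHom Γ h3 x).count t| ≤ 1 := by
      classical
      have hgen (v : V) (t) : |(artinCountHom Γ h3 (artinGen Γ v)).count t| ≤ 1 := by
        rw [artinCountHom_artinGen, count_single]
        split_ifs <;> simp
      rcases hlS x List.mem_cons_self with ⟨v, rfl⟩ | ⟨v, hv⟩
      · exact hgen v t
      · rw [← inv_inv x, ← hv, map_inv, count_inv, abs_neg]
        exact hgen v _
    have ih' := ih ((artinCountHom Γ h3 x).right⁻¹ * t * (artinCountHom Γ h3 x).right)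
      fun y hy => hlS y (List.mem_cons_of_mem _ hy)
    rw [List.prod_cons, map_mul, count_mul, List.length_cons]
    push_cast
    linarith [abs_add_le ((artinCountHom Γ h3 x).count t) ((artinCountHom Γ h3 l.prod).count
      ((artinCountHom Γ h3 x).right⁻¹ * t * (artinCountHom Γ h3 x).right))]

theorem commute_artinGen_artinCentral {a b : V} (h : Γ.graph.Adj a b) :
    Commute (artinGen Γ a) (artinCentral Γ a b) :=
  (commute_mul_pow_of_altProd_eq (altProd_artinGen_comm Γ h)).symm

theorem artinDelta_mul_self {a b : V} (h : Γ.graph.Adj a b) :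
    artinDelta Γ a b * artinDelta Γ a b = artinCentral Γ a b :=
  altProd_mul_self (altProd_artinGen_comm Γ h)

theorem artinCentral_comm {a b : V} (h : Γ.graph.Adj a b) :
    artinCentral Γ a b = artinCentral Γ b a := by
  rw [← artinDelta_mul_self h, ← artinDelta_mul_self h.symm, artinDelta, artinDelta,
    Γ.label_symm b a, altProd_artinGen_comm Γ h]

theorem count_artinGen_zpow_mul_artinCentral_zpow {a b : V} (h : Γ.graph.Adj a b) (i j : ℤ)
    (t : (V →₀ ℝ) ≃ₗ[ℝ] (V →₀ ℝ)) [Decidable (t = Γ.refl a)] :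
    (artinCountHom Γ h3 (artinGen Γ a ^ i * artinCentral Γ a b ^ j)).count t =
      (if t = Γ.refl a then i else 0) + j * (artinCountHom Γ h3 (artinCentral Γ a b)).count t := by
  have hright : (artinCountHom Γ h3 (artinCentral Γ a b)).right = 1 := by
    rw [artinCountHom_artinCentral, right_single_mul_single_pow, Γ.refl_mul_refl_pow h (h3 h)]
  have hright' : ((artinCountHom Γ h3 (artinCentral Γ a b)) ^ j).right = 1 := by
    have := map_zpow (SemidirectProduct.rightHom :
      CountGroup ((V →₀ ℝ) ≃ₗ[ℝ] (V →₀ ℝ)) →* _) (artinCountHom Γ h3 (artinCentral Γ a b)) j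
    rw [SemidirectProduct.rightHom_eq_right, hright, one_zpow] at this
    exact this
  rw [((commute_artinGen_artinCentral h).zpow_zpow i j).eq, map_mul, map_zpow, map_zpow,
    count_mul, hright', count_zpow (by simp [hright]), artinCountHom_artinGen, inv_one, one_mul,
    mul_one, count_single_zpow, add_comm]

theorem count_artinCentral_pos {a b : V} (h : Γ.graph.Adj a b) :
    0 < (artinCountHom Γ h3 (artinCentral Γ a b)).count (Γ.refl b) := by
  have := count_single_mul_single_pow_pos (Γ.refl_mul_self b) (Γ.refl_mul_self a)
    (m := Γ.label b a) (k := 0) (by have := h3 h.symm; omega)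
  rw [artinCentral_comm h, artinCountHom_artinCentral]
  simpa [altProd] using this

theorem count_artinCentral_pos_conj {a b : V} (h : Γ.graph.Adj a b) :
    0 < (artinCountHom Γ h3 (artinCentral Γ a b)).count (Γ.refl a * Γ.refl b * Γ.refl a) := by
  have := count_single_mul_single_pow_pos (Γ.refl_mul_self a) (Γ.refl_mul_self b)
    (m := Γ.label a b) (k := 1) (by have := h3 h; omega)
  rw [artinCountHom_artinCentral]
  simpa [altProd, mul_assoc] using this

theorem count_artinCentral_eq_zero {a b c : V} (hb : a ≠ b) (hc : c ≠ b) :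
    (artinCountHom Γ h3 (artinCentral Γ a c)).count (Γ.refl b) = 0 := by
  rw [artinCountHom_artinCentral]
  exact count_single_mul_single_pow_eq_zero (Γ.refl_mul_self a) (Γ.refl_mul_self c)
    fun k => Γ.altProd_refl_ne hb hc k

include h3 in
theorem exists_isQIEmbedding_zpowersMul {a b : V} (h : Γ.graph.Adj a b) :
    ∃ A : ℝ, 0 < A ∧ ∃ f : EuclideanSpace ℝ (Fin 2) → ArtinGroup Γ,
      IsQIEmbedding A A (fun x y => dist x y) (wordDist (Set.range (artinGen Γ))) f ∧
        Set.range f = ((commute_artinGen_artinCentral h).zpowersMul : Set (ArtinGroup Γ)) := by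
  classical
  set c := |(artinCountHom Γ h3 (artinCentral Γ a b)).count (Γ.refl a)| with hc
  have hc0 : 0 ≤ c := abs_nonneg _
  refine Commute.exists_isQIEmbedding (closure_range_artinGen Γ) _ (K := ((2 + c : ℤ) : ℝ))
    (by exact_mod_cast (by linarith : 0 ≤ 2 + c)) fun i j => ?_
  have hb := abs_count_artinCountHom_le h3 (artinGen Γ a ^ i * artinCentral Γ a b ^ j) (Γ.refl b)
  have ha := abs_count_artinCountHom_le h3 (artinGen Γ a ^ i * artinCentral Γ a b ^ j) (Γ.refl a)
  rw [count_artinGen_zpow_mul_artinCentral_zpow h3 h] at ha hb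
  rw [if_neg (Γ.refl_ne_refl h.ne), zero_add, abs_mul] at hb
  rw [if_pos rfl] at ha
  set n := wordLength (Set.range (artinGen Γ)) (artinGen Γ a ^ i * artinCentral Γ a b ^ j)
  have hj : |j| ≤ n := by
    have h1 : 1 ≤ |(artinCountHom Γ h3 (artinCentral Γ a b)).count (Γ.refl b)| :=
      Int.one_le_abs (count_artinCentral_pos h3 h).ne'
    nlinarith [abs_nonneg j]
  have hi : |i| ≤ n + n * c := by
    have h1 := abs_sub (i + j * (artinCountHom Γ h3 (artinCentral Γ a b)).count (Γ.refl a))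
      (j * (artinCountHom Γ h3 (artinCentral Γ a b)).count (Γ.refl a))
    rw [add_sub_cancel_right, abs_mul, ← hc] at h1
    nlinarith
  have : |i| + |j| ≤ (2 + c) * n := by linarith
  exact_mod_cast this

include h3 in
theorem zpowersMul_inf_zpowersMul_symm {a b : V} (h : Γ.graph.Adj a b) :
    (commute_artinGen_artinCentral h).zpowersMul ⊓
      (commute_artinGen_artinCentral h.symm).zpowersMul =
        Subgroup.zpowers (artinCentral Γ a b) := by
  classical
  ext g
  rw [Subgroup.mem_inf, Commute.mem_zpowersMul, Commute.mem_zpowersMul, Subgroup.mem_zpowers_iff]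
  constructor
  · rintro ⟨⟨i, j, rfl⟩, ⟨k, l, hkl⟩⟩
    have hcount (t) := congrArg (fun g => (artinCountHom Γ h3 g).count t) hkl
    simp only [count_artinGen_zpow_mul_artinCentral_zpow h3 h,
      count_artinGen_zpow_mul_artinCentral_zpow h3 h.symm] at hcount
    simp only [← artinCentral_comm h] at hcount
    have hne : Γ.refl a * Γ.refl b * Γ.refl a ≠ Γ.refl a := by
      rw [Ne, mul_eq_right, ← Γ.refl_mul_self a, mul_right_inj]
      exact Γ.refl_ne_refl h.ne
    have hj : j = l := by
      have := hcount (Γ.refl a * Γ.refl b * Γ.refl a)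
      rw [if_neg hne, if_neg (Γ.refl_mul_refl_mul_refl_ne h (h3 h)), zero_add, zero_add] at this
      exact mul_right_cancel₀ (count_artinCentral_pos_conj h3 h).ne' this
    have hi : i = 0 := by
      have := hcount (Γ.refl a)
      rwa [if_pos rfl, if_neg (Γ.refl_ne_refl h.ne.symm), hj, add_left_inj] at this
    exact ⟨j, by simp [hi]⟩
  · rintro ⟨j, rfl⟩
    exact ⟨⟨0, j, by simp⟩, ⟨0, j, by simp [artinCentral_comm h]⟩⟩

include h3 in
theorem zpowersMul_inf_zpowersMul {a b c : V} (hb : Γ.graph.Adj a b) (hc : Γ.graph.Adj a c)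
    (hbc : b ≠ c) :
    (commute_artinGen_artinCentral hb).zpowersMul ⊓
      (commute_artinGen_artinCentral hc).zpowersMul = Subgroup.zpowers (artinGen Γ a) := by
  classical
  ext g
  rw [Subgroup.mem_inf, Commute.mem_zpowersMul, Commute.mem_zpowersMul, Subgroup.mem_zpowers_iff]
  constructor
  · rintro ⟨⟨i, j, rfl⟩, ⟨k, l, hkl⟩⟩
    have hcount := congrArg (fun g => (artinCountHom Γ h3 g).count (Γ.refl b)) hkl
    simp only [count_artinGen_zpow_mul_artinCentral_zpow h3 hb,
      count_artinGen_zpow_mul_artinCentral_zpow h3 hc, if_neg (Γ.refl_ne_refl hb.ne),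
      count_artinCentral_eq_zero h3 hb.ne hbc.symm, mul_zero, zero_add] at hcount
    have hj : j = 0 := (mul_eq_zero.1 hcount).resolve_right (count_artinCentral_pos h3 hb).ne'
    exact ⟨i, by simp [hj]⟩
  · rintro ⟨i, rfl⟩
    exact ⟨⟨i, 0, by simp⟩, ⟨i, 0, by simp⟩⟩

theorem hausdorffClose_zpowers_mul_self {G : Type*} [Group G] {S : Set G}
    (hS : Subgroup.closure S = ⊤) (x : G) :
    HausdorffClose (wordDist S) (wordLength S x + 1) (Subgroup.zpowers x : Set G)
      (Subgroup.zpowers (x * x) : Set G) := by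
  have hsq (q : ℤ) : (x * x) ^ q = x ^ (2 * q) := by rw [zpow_mul, zpow_two]
  constructor
  · rintro _ ⟨n, rfl⟩
    refine ⟨(x * x) ^ (n / 2), ⟨_, rfl⟩, ?_⟩
    have : (x ^ n)⁻¹ * (x * x) ^ (n / 2) = (x ^ (n % 2))⁻¹ := by
      rw [hsq, ← zpow_neg, ← zpow_neg, ← zpow_add]; congr 1; omega
    simp only [wordDist, this, wordLength_inv hS]
    rcases Int.emod_two_eq_zero_or_one n with h | h <;> rw [h]
    · simp only [zpow_zero, wordLength_one, Nat.cast_zero]; positivity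
    · rw [zpow_one]; linarith
  · rintro _ ⟨q, rfl⟩
    refine ⟨(x * x) ^ q, ⟨2 * q, (hsq q).symm⟩, ?_⟩
    simp only [wordDist_self]; positivity

end ArtinCount

section StableLines

variable {V : Type*} [Finite V] {Γ : LabeledGraph V}
  (h3 : ∀ ⦃a b⦄, Γ.graph.Adj a b → 3 ≤ Γ.label a b)

include h3 in
theorem exists_isQuasiflatIntersection_zpowers_artinDelta {a b : V} (h : Γ.graph.Adj a b) :
    ∃ A : ℝ, 0 < A ∧ ∃ k : ℝ → ℝ, (∀ r, 0 < k r) ∧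
      IsQuasiflatIntersection (Set.range (artinGen Γ)) A k
        (Subgroup.zpowers (artinDelta Γ a b) : Set (ArtinGroup Γ)) := by
  have hS := closure_range_artinGen Γ
  obtain ⟨A, hA, k, hk, hQ⟩ := exists_isQuasiflatIntersection_inf hS (Set.finite_range _) _ _
    (exists_isQIEmbedding_zpowersMul h3 h) (exists_isQIEmbedding_zpowersMul h3 h.symm)
  rw [zpowersMul_inf_zpowersMul_symm h3 h, ← artinDelta_mul_self h] at hQ
  exact ⟨A, hA, _, fun r => add_pos (by positivity) (hk r),
    hQ.of_hausdorffClose hS (hausdorffClose_zpowers_mul_self hS _)⟩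

include h3 in
theorem exists_isQuasiflatIntersection_zpowers_artinGen_of_adj {a b c : V}
    (hb : Γ.graph.Adj a b) (hc : Γ.graph.Adj a c) (hbc : b ≠ c) :
    ∃ A : ℝ, 0 < A ∧ ∃ k : ℝ → ℝ, (∀ r, 0 < k r) ∧
      IsQuasiflatIntersection (Set.range (artinGen Γ)) A k
        (Subgroup.zpowers (artinGen Γ a) : Set (ArtinGroup Γ)) := by
  rw [← zpowersMul_inf_zpowersMul h3 hb hc hbc]
  exact exists_isQuasiflatIntersection_inf (closure_range_artinGen Γ) (Set.finite_range _) _ _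
    (exists_isQIEmbedding_zpowersMul h3 hb) (exists_isQIEmbedding_zpowersMul h3 hc)

theorem LabeledGraph.CLTTF.exists_adj_adj_ne (hΓ : Γ.CLTTF) {a : V} (ha : ¬Γ.IsLeaf a) :
    ∃ b c, Γ.graph.Adj a b ∧ Γ.graph.Adj a c ∧ b ≠ c := by
  have : Nontrivial V := Finite.one_lt_card_iff_nontrivial.1 (by have := hΓ.2.1; omega)
  obtain ⟨b, hb⟩ := hΓ.1.preconnected.exists_adj_of_nontrivial a
  by_contra! hcon
  exact ha ⟨b, hb, fun c hc => hcon c b hc hb⟩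

theorem hausdorffClose_zpowers_of_mul_eq {G : Type*} [Group G] {S : Set G} {x y d : G} (h : x * d = d * y) :
    HausdorffClose (wordDist S) (wordLength S d + 1) (Subgroup.zpowers x : Set G)
      ((d * ·) '' (Subgroup.zpowers y : Set G)) := by
  have hconj (n : ℤ) : d * y ^ n = x ^ n * d := by
    have : SemiconjBy d y x := h.symm
    exact (this.zpow_right n).eq
  have hdist (n : ℤ) : wordDist S (x ^ n) (d * y ^ n) < wordLength S d + 1 := by
    rw [hconj, wordDist, inv_mul_cancel_left]; linarith
  constructor
  · rintro _ ⟨n, rfl⟩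
    exact ⟨_, ⟨_, ⟨n, rfl⟩, rfl⟩, hdist n⟩
  · rintro _ ⟨_, ⟨n, rfl⟩, rfl⟩
    exact ⟨_, ⟨n, rfl⟩, hdist n⟩

theorem LabeledGraph.CLTTF.exists_isQuasiflatIntersection_zpowers_artinGen (hΓ : Γ.CLTTF) {a : V}
    (ha : Γ.StableVertex a) :
    ∃ A : ℝ, 0 < A ∧ ∃ k : ℝ → ℝ, (∀ r, 0 < k r) ∧
      IsQuasiflatIntersection (Set.range (artinGen Γ)) A k
        (Subgroup.zpowers (artinGen Γ a) : Set (ArtinGroup Γ)) := by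
  have hnonleaf {a : V} (ha : ¬Γ.IsLeaf a) : ∃ A : ℝ, 0 < A ∧ ∃ k : ℝ → ℝ, (∀ r, 0 < k r) ∧
      IsQuasiflatIntersection (Set.range (artinGen Γ)) A k
        (Subgroup.zpowers (artinGen Γ a) : Set (ArtinGroup Γ)) := by
    obtain ⟨b, c, hb, hc, hbc⟩ := hΓ.exists_adj_adj_ne ha
    exact exists_isQuasiflatIntersection_zpowers_artinGen_of_adj hΓ.2.2.1 hb hc hbc
  rcases ha with ha | ⟨-, b, hab, hodd, hb⟩
  · exact hnonleaf ha
  · have hS := closure_range_artinGen Γ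
    obtain ⟨A, hA, k, hk, hQ⟩ := hnonleaf hb
    have hconj : artinGen Γ a * artinDelta Γ a b = artinDelta Γ a b * artinGen Γ b :=
      mul_altProd_of_odd hodd (altProd_artinGen_comm Γ hab)
    exact ⟨A, hA, _, fun r => add_pos (by positivity) (hk r),
      (hQ.mul_left (artinDelta Γ a b)).of_hausdorffClose hS
        (hausdorffClose_zpowers_of_mul_eq hconj)⟩

theorem exists_uniform_isQuasiflatIntersection {G : Type*} [Group G] {S : Set G}
    {F : Set (Set G)} (hF : F.Finite)
    (h : ∀ C ∈ F, ∃ A : ℝ, 0 < A ∧ ∃ k : ℝ → ℝ, (∀ r, 0 < k r) ∧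
      IsQuasiflatIntersection S A k C) :
    ∃ A : ℝ, 0 < A ∧ ∃ k : ℝ → ℝ, (∀ r, 0 < k r) ∧
      ∀ C ∈ F, IsQuasiflatIntersection S A k C := by
  induction F, hF using Set.Finite.induction_on with
  | empty => exact ⟨1, one_pos, fun _ => 1, fun _ => one_pos, by simp⟩
  | @insert C F _ _ ih =>
    obtain ⟨A, hA, k, hk, hQ⟩ := ih fun C hC => h C (Set.mem_insert_of_mem _ hC)
    obtain ⟨A', hA', k', hk', hQ'⟩ := h C (Set.mem_insert _ _)
    refine ⟨A + A', add_pos hA hA', fun r => k r + k' r, fun r => add_pos (hk r) (hk' r), ?_⟩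
    rintro D (rfl | hD)
    · exact hQ'.mono hA' (by linarith) fun r => by linarith [hk r]
    · exact (hQ D hD).mono hA (by linarith) fun r => by linarith [hk' r]

end StableLines

/-- In a CLTTF Artin group, every stable coset is a coarse
intersection of three `2`-dimensional quasiflats, with uniform constants. -/
theorem stable_coset_coarse_intersection_of_quasiflats {V : Type*} [Finite V]
    (Γ : LabeledGraph V) (hΓ : Γ.CLTTF) :
    ∃ A : ℝ, 0 < A ∧ ∃ k : ℝ → ℝ, (∀ r : ℝ, 0 < r → 0 < k r) ∧
      ∀ C : Set (ArtinGroup Γ), StableCoset Γ C →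
        ∃ Q₁ Q₂ Q₃ : Set (ArtinGroup Γ),
          (∃ f₁ : EuclideanSpace ℝ (Fin 2) → ArtinGroup Γ,
            IsQIEmbedding A A (fun x y => dist x y) (artinDist Γ) f₁ ∧
              Set.range f₁ = Q₁) ∧
          (∃ f₂ : EuclideanSpace ℝ (Fin 2) → ArtinGroup Γ,
            IsQIEmbedding A A (fun x y => dist x y) (artinDist Γ) f₂ ∧
              Set.range f₂ = Q₂) ∧
          (∃ f₃ : EuclideanSpace ℝ (Fin 2) → ArtinGroup Γ,
            IsQIEmbedding A A (fun x y => dist x y) (artinDist Γ) f₃ ∧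
              Set.range f₃ = Q₃) ∧
          ∀ r : ℝ, A ≤ r →
            HausdorffClose (artinDist Γ) (k r) C
              (coarseNbhd (artinDist Γ) r Q₁ ∩ coarseNbhd (artinDist Γ) r Q₂ ∩
                coarseNbhd (artinDist Γ) r Q₃) := by
  set F : Set (Set (ArtinGroup Γ)) :=
    {C | (∃ a b : V, Γ.graph.Adj a b ∧ C = Subgroup.zpowers (artinDelta Γ a b)) ∨
      ∃ a : V, Γ.StableVertex a ∧ C = Subgroup.zpowers (artinGen Γ a)} with hFdef
  have hF : F.Finite := by
    refine ((Set.finite_range fun p : V × V =>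
      (Subgroup.zpowers (artinDelta Γ p.1 p.2) : Set (ArtinGroup Γ))).union
      (Set.finite_range fun a : V =>
        (Subgroup.zpowers (artinGen Γ a) : Set (ArtinGroup Γ)))).subset ?_
    rintro C (⟨a, b, -, rfl⟩ | ⟨a, -, rfl⟩)
    exacts [Or.inl ⟨(a, b), rfl⟩, Or.inr ⟨a, rfl⟩]
  obtain ⟨A, hA, k, hk, hQ⟩ := exists_uniform_isQuasiflatIntersection
    (S := Set.range (artinGen Γ)) hF <| by
      rintro C (⟨a, b, hab, rfl⟩ | ⟨a, ha, rfl⟩)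
      · exact exists_isQuasiflatIntersection_zpowers_artinDelta hΓ.2.2.1 hab
      · exact hΓ.exists_isQuasiflatIntersection_zpowers_artinGen ha
  refine ⟨A, hA, k, fun r _ => hk r, ?_⟩
  rintro C (⟨g, a, b, hab, rfl⟩ | ⟨g, a, ha, rfl⟩)
  · exact (hQ _ (Or.inl ⟨a, b, hab, rfl⟩)).mul_left g
  · exact (hQ _ (Or.inr ⟨a, ha, rfl⟩)).mul_left g
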